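/- arXiv:1912.02879 — 2 statements merged into one kernel-verified Lean document; each statement's English description precedes it below -/
import Mathlib

section
/- Suppose supp(Q_k) is nonempty for every k ∈ {1,…,K}. Let k ∈ {1,…,K} and suppose that some k' ≠ k masks k, i.e. supp(Q_{k'}) ⊆ supp(Q_k) for some k' ≠ k. Then the factor loading A_k is not identifiable: there exist matrices Θ̃ ∈ ℝ^{N×K} and Ã ∈ ℝ^{J×K} satisfying assumptions (1)–(3) with Θ̃Ãᵀ = ΘAᵀ such that Ã_k and A_k are linearly independent. -/
/-!
If `k'` masks `k`, replace `A_k` by `A_k + A_{k'}` and `Θ_{k'}` by `Θ_{k'} - Θ_k`. These are right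
multiplications by transvections `T` and `P` with `P * Tᵀ = 1`, so `ΘAᵀ` is unchanged. Masking keeps
the new column inside `supp(Q_k)`. On the rows `R(S)`, either `k' ∉ S` and `A_{k'}` vanishes there,
or masking puts both `k` and `k'` in `S` and the change is an invertible column operation within the
block. Finally, a row in `supp(Q_{k'})` has a pattern containing both `k` and `k'`, so assumption
(2) makes `A_k` and `A_{k'}` linearly independent, and with them `A_k + A_{k'}` and `A_k`.
-/

open Matrix

/-- The support of column `k` of the binary design matrix `Q`. -/
def suppQ {J K : ℕ} (Q : Fin J → Fin K → Bool) (k : Fin K) : Set (Fin J) :=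
  {j | Q j k = true}

/-- `R(S)`: the rows `j` such that `Q j k = 1` exactly for `k ∈ S`. -/
def Rset {J K : ℕ} (Q : Fin J → Fin K → Bool) (S : Set (Fin K)) : Set (Fin J) :=
  {j | ∀ k, Q j k = true ↔ k ∈ S}

/-- Assumption (1): the columns of `Θ` are linearly independent. -/
def Assm1 {N K : ℕ} (Θ : Matrix (Fin N) (Fin K) ℝ) : Prop :=
  LinearIndependent ℝ (fun k : Fin K => fun i : Fin N => Θ i k)

/-- Assumption (2): for every `S` with `R(S)` nonempty, the columns of the
submatrix `A_{[R(S),S]}` are linearly independent. -/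
def Assm2 {J K : ℕ} (A : Matrix (Fin J) (Fin K) ℝ) (Q : Fin J → Fin K → Bool) : Prop :=
  ∀ S : Set (Fin K), (Rset Q S).Nonempty →
    LinearIndependent ℝ (fun k : S => fun j : Rset Q S => A j.1 k.1)

/-- Assumption (3): `A_k(j) = 0` whenever `Q_k(j) = 0`. -/
def Assm3 {J K : ℕ} (A : Matrix (Fin J) (Fin K) ℝ) (Q : Fin J → Fin K → Bool) : Prop :=
  ∀ j k, Q j k = false → A j k = 0

section Transvection

variable {R l m n o : Type*} [CommRing R] [DecidableEq n]

lemma transpose_transvection (i j : n) (c : R) : (transvection i j c)ᵀ = transvection j i c := by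
  simp [transvection]

variable [Fintype n]

lemma mul_transvection_apply (M : Matrix m n R) (i j : n) (c : R) (a : m) (b : n) :
    (M * transvection i j c) a b = M a b + if b = j then c * M a i else 0 := by
  split_ifs with hb
  · rw [hb, mul_transvection_apply_same]
  · rw [mul_transvection_apply_of_ne _ _ _ _ hb, add_zero]

lemma mul_transvection_apply_of_eq_zero (M : Matrix m n R) {a : m} {i : n} (h : M a i = 0)
    (j : n) (c : R) (b : n) : (M * transvection i j c) a b = M a b := by
  simp [mul_transvection_apply, h]

lemma col_mul_transvection (M : Matrix m n R) (i j : n) (c : R) :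
    (M * transvection i j c).col = M.col + ((Pi.single j c : n → R) · • M.col i) := by
  ext b a
  simp [mul_transvection_apply, Pi.single_apply, ite_apply]

lemma linearIndependent_col_mul_transvection_iff (M : Matrix m n R) {i j : n} (hij : i ≠ j)
    (c : R) : LinearIndependent R (M * transvection i j c).col ↔ LinearIndependent R M.col := by
  rw [col_mul_transvection]
  exact linearIndependent_add_smul_iff (c := Pi.single j c) (Pi.single_eq_of_ne hij _)

lemma submatrix_mul_transvection [Fintype o] [DecidableEq o] (M : Matrix m n R) (f : l → m)
    {e : o → n} (he : e.Injective) (i j : o) (c : R) :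
    (M * transvection (e i) (e j) c).submatrix f e = M.submatrix f e * transvection i j c := by
  ext a b
  simp [mul_transvection_apply, he.eq_iff]

lemma mul_transvection_mul_transpose_mul_transvection (M : Matrix l n R) (N : Matrix m n R)
    {i j : n} (hij : i ≠ j) (c : R) :
    M * transvection i j (-c) * (N * transvection j i c)ᵀ = M * Nᵀ := by
  rw [transpose_mul, transpose_transvection, Matrix.mul_assoc,
    ← Matrix.mul_assoc (transvection i j (-c)), transvection_mul_transvection_same _ _ hij,
    neg_add_cancel, transvection_zero, Matrix.one_mul]

end Transvection

section Loading

variable {R l m n : Type*}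

/-- `R(S)` for a design given by its column supports: the rows lying in `supp k` exactly for
`k ∈ S`. -/
def patternRows (supp : n → Set m) (S : Set n) : Set m :=
  {j | ∀ k, j ∈ supp k ↔ k ∈ S}

/-- `A` is a factor loading matrix for the design with column supports `supp`: assumptions (2) and
(3) over an arbitrary semiring and arbitrary index types, with `supp k` in place of the binary
column `Q_k`. -/
structure IsLoadingMatrix [Semiring R] (supp : n → Set m) (A : Matrix m n R) : Prop where
  linearIndependent_block : ∀ S, (patternRows supp S).Nonempty →
    LinearIndependent R (A.submatrix ((↑) : patternRows supp S → m) ((↑) : S → n)).col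
  apply_eq_zero : ∀ {j k}, j ∉ supp k → A j k = 0

lemma isLoadingMatrix_suppQ_iff {J K : ℕ} {A : Matrix (Fin J) (Fin K) ℝ}
    {Q : Fin J → Fin K → Bool} : IsLoadingMatrix (suppQ Q) A ↔ Assm2 A Q ∧ Assm3 A Q :=
  ⟨fun hA => ⟨hA.linearIndependent_block, fun _ _ h => hA.apply_eq_zero (by simp [suppQ, h])⟩,
    fun hA => ⟨hA.1, fun {j k} h => hA.2 j k (by simpa [suppQ] using h)⟩⟩

namespace IsLoadingMatrix

variable {supp : n → Set m} {A : Matrix m n R} {k k' : n}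

lemma linearIndepOn_col [Semiring R] (hA : IsLoadingMatrix supp A) {S : Set n}
    (hS : (patternRows supp S).Nonempty) : LinearIndepOn R A.col S :=
  (hA.linearIndependent_block S hS).of_comp (LinearMap.funLeft R R ((↑) : patternRows supp S → m))

lemma linearIndependent_pair_col [Ring R] (hA : IsLoadingMatrix supp A) (hne : k ≠ k')
    (h : (supp k ∩ supp k').Nonempty) : LinearIndependent R ![A.col k, A.col k'] := by
  obtain ⟨j, hk, hk'⟩ := h
  have hS : LinearIndepOn R A.col {i | j ∈ supp i} := hA.linearIndepOn_col ⟨j, fun _ => Iff.rfl⟩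
  have hpair : LinearIndepOn R A.col {k, k'} := hS.mono (Set.pair_subset hk hk')
  exact LinearIndependent.pair_iff.2 ((LinearIndepOn.pair_iff _ hne).1 hpair)

lemma mul_transvection [CommRing R] [Fintype n] [DecidableEq n] (hA : IsLoadingMatrix supp A)
    (hne : k' ≠ k) (hmask : supp k' ⊆ supp k) (c : R) :
    IsLoadingMatrix supp (A * transvection k' k c) where
  linearIndependent_block S hS := by
    classical
    by_cases hk' : k' ∈ S
    · obtain ⟨j, hj⟩ := hS
      have hk : k ∈ S := (hj k).1 (hmask ((hj k').2 hk'))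
      rw [submatrix_mul_transvection A _ Subtype.val_injective ⟨k', hk'⟩ ⟨k, hk⟩,
        linearIndependent_col_mul_transvection_iff _ (by simpa using hne)]
      exact hA.linearIndependent_block S ⟨j, hj⟩
    · convert hA.linearIndependent_block S hS using 2
      ext j i
      exact mul_transvection_apply_of_eq_zero A
        (hA.apply_eq_zero fun h => hk' ((j.2 k').1 h)) k c i
  apply_eq_zero {j i} hj := by
    rw [mul_transvection_apply, hA.apply_eq_zero hj, zero_add, ite_eq_right_iff]
    rintro rfl
    rw [hA.apply_eq_zero fun h => hj (hmask h), mul_zero]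

end IsLoadingMatrix

theorem factor_loading_not_identifiable_of_masked_general [CommRing R] [Fintype n]
    {supp : n → Set m} {Θ : Matrix l n R} {A : Matrix m n R} {k k' : n}
    (hΘ : LinearIndependent R Θ.col) (hA : IsLoadingMatrix supp A) (hne : k' ≠ k)
    (hmask : supp k' ⊆ supp k) (hsupp : (supp k').Nonempty) :
    ∃ (Θ' : Matrix l n R) (A' : Matrix m n R),
      LinearIndependent R Θ'.col ∧ IsLoadingMatrix supp A' ∧ Θ' * A'ᵀ = Θ * Aᵀ ∧
      LinearIndependent R ![A'.col k, A.col k] := by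
  classical
  have hcol : (A * transvection k' k (1 : R)).col k = A.col k' + A.col k := by
    simp [col_mul_transvection, add_comm]
  have hpair : LinearIndependent R ![A.col k', A.col k] :=
    hA.linearIndependent_pair_col hne (by rwa [Set.inter_eq_left.2 hmask])
  refine ⟨Θ * transvection k k' (-1), A * transvection k' k 1,
    (linearIndependent_col_mul_transvection_iff Θ hne.symm _).2 hΘ, hA.mul_transvection hne hmask 1,
    mul_transvection_mul_transpose_mul_transvection Θ A hne.symm 1, ?_⟩
  rwa [hcol, LinearIndependent.pair_add_left_iff]

end Loading

theorem factor_loading_not_identifiable_of_masked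
    {K N J : ℕ} (hK : 0 < K) (hN : 0 < N) (hJ : 0 < J)
    (Θ : Matrix (Fin N) (Fin K) ℝ) (A : Matrix (Fin J) (Fin K) ℝ)
    (Q : Fin J → Fin K → Bool)
    (hΘ : Assm1 Θ) (hA2 : Assm2 A Q) (hA3 : Assm3 A Q)
    (hsupp : ∀ k : Fin K, (suppQ Q k).Nonempty)
    (k : Fin K)
    (hmask : ∃ k' : Fin K, k' ≠ k ∧ suppQ Q k' ⊆ suppQ Q k) :
    ∃ (Θ' : Matrix (Fin N) (Fin K) ℝ) (A' : Matrix (Fin J) (Fin K) ℝ),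
      Assm1 Θ' ∧ Assm2 A' Q ∧ Assm3 A' Q ∧ Θ' * A'ᵀ = Θ * Aᵀ ∧
      LinearIndependent ℝ ![fun j : Fin J => A' j k, fun j : Fin J => A j k] := by
  obtain ⟨k', hne, hsub⟩ := hmask
  obtain ⟨Θ', A', hΘ', hA', h⟩ := factor_loading_not_identifiable_of_masked_general hΘ
    (isLoadingMatrix_suppQ_iff.2 ⟨hA2, hA3⟩) hne hsub (hsupp k')
  exact ⟨Θ', A', hΘ', (isLoadingMatrix_suppQ_iff.1 hA').1, (isLoadingMatrix_suppQ_iff.1 hA').2, h⟩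
end

section
/- Suppose Θ, A, Q satisfy assumptions (1)–(3) and supp(Q_k) is nonempty for every k ∈ {1,…,K}. If the latent factor Θ_k is not identifiable for some k, then there exists k' ≠ k such that the factor loading A_{k'} is not identifiable; i.e. there exist matrices Θ̃ ∈ ℝ^{N×K} and Ã ∈ ℝ^{J×K} satisfying assumptions (1)–(3) with Θ̃Ãᵀ = ΘAᵀ such that Ã_{k'} and A_{k'} are linearly independent. -/
/-!
A linear relation among the columns of a loading matrix, restricted to the rows in `R(S)`, involves
only the columns in `S`, which are independent there; every column lies in such an `S`, so the
columns are linearly independent.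

Let `Θ' * A'ᵀ = Θ * Aᵀ` and suppose `A_m` is a multiple of `A'_m` for every `m ≠ k`. As the columns
of `A'` are independent, some functional `φ` kills every `A'_m` with `m ≠ k` but not `A'_k`; it then
kills every `A_m` with `m ≠ k` as well. Applying `φ` to the rows of `Θ' * A'ᵀ = Θ * Aᵀ` leaves
`φ(A'_k) • Θ'_k = φ(A_k) • Θ_k`, so `Θ'_k` is a multiple of `Θ_k`. Hence any factorization
witnessing that `Θ_k` is not identifiable witnesses the same for some `A_m` with `m ≠ k`.
-/

open Matrix

section LinearIndependence

variable {κ R M : Type*} [Ring R] [AddCommGroup M] [Module R M]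

lemma linearIndependent_of_forall_linearIndepOn_comp {N : κ → Type*} [∀ k, AddCommGroup (N k)]
    [∀ k, Module R (N k)] {v : κ → M} (f : ∀ k, M →ₗ[R] N k) (S : κ → Set κ)
    (mem : ∀ k, k ∈ S k) (indep : ∀ k, LinearIndepOn R (f k ∘ v) (S k))
    (vanish : ∀ k, ∀ l ∉ S k, f k (v l) = 0) : LinearIndependent R v := by
  classical
  rw [linearIndependent_iff']
  intro s g relation k hk
  have restricted_relation : ∑ l ∈ s with l ∈ S k, g l • (f k ∘ v) l = 0 := by
    rw [Finset.sum_filter_of_ne]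
    · simpa only [Function.comp_apply, map_sum, map_smul, map_zero] using congrArg (f k) relation
    · intro l _ hl
      by_contra hlS
      exact hl (by rw [Function.comp_apply, vanish k l hlS, smul_zero])
  exact linearIndepOn_iff'.1 (indep k) _ g (fun l hl => (Finset.mem_filter.1 hl).2)
    restricted_relation k (Finset.mem_filter.2 ⟨hk, mem k⟩)

lemma exists_linearMap_ne_zero_forall_ne_eq_zero {F V : Type*} [DivisionRing F] [AddCommGroup V]
    [Module F V] {v : κ → V} (hv : LinearIndependent F v) (k : κ) :
    ∃ φ : V →ₗ[F] F, φ (v k) ≠ 0 ∧ ∀ m ≠ k, φ (v m) = 0 := by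
  have hk : v k ∉ Submodule.span F (v '' {k}ᶜ) := hv.notMem_span_image (by simp)
  obtain ⟨φ, hφk, hφ⟩ := Submodule.exists_le_ker_of_notMem hk
  exact ⟨φ, hφk, fun m hm => hφ (Submodule.subset_span ⟨m, hm, rfl⟩)⟩

end LinearIndependence

section Factorization

variable {ν ι κ : Type*} [Fintype κ]

lemma map_row_mul_transpose {R : Type*} [Semiring R] (φ : (ι → R) →ₗ[R] R) (Θ : Matrix ν κ R)
    (A : Matrix ι κ R) (i : ν) : φ ((Θ * Aᵀ).row i) = ∑ m, Θ i m * φ (A.col m) := by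
  have row_eq : (Θ * Aᵀ).row i = ∑ m, Θ i m • A.col m :=
    (mul_apply_eq_vecMul Θ Aᵀ i).trans (vecMul_eq_sum (Θ i) Aᵀ)
  simp only [row_eq, map_sum, map_smul, smul_eq_mul]

lemma exists_linearIndependent_pair_col_of_mul_transpose_eq {F : Type*} [Field F]
    {Θ Θ' : Matrix ν κ F} {A A' : Matrix ι κ F} (hA' : LinearIndependent F A'.col)
    (heq : Θ' * A'ᵀ = Θ * Aᵀ) {k : κ} (hk : ∀ c : F, Θ'.col k ≠ c • Θ.col k) :
    ∃ m ≠ k, LinearIndependent F ![A'.col m, A.col m] := by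
  by_contra! dependent
  obtain ⟨φ, hφk, hφA'⟩ := exists_linearMap_ne_zero_forall_ne_eq_zero hA' k
  have hφA : ∀ m ≠ k, φ (A.col m) = 0 := by
    intro m hm
    obtain ⟨a, ha⟩ : ∃ a : F, a • A'.col m = A.col m := by
      simpa [LinearIndependent.pair_iff' (hA'.ne_zero m)] using dependent m hm
    rw [← ha, map_smul, hφA' m hm, smul_zero]
  refine hk (φ (A.col k) / φ (A'.col k)) (funext fun i => ?_)
  have entry_eq : Θ' i k * φ (A'.col k) = Θ i k * φ (A.col k) := by
    calc Θ' i k * φ (A'.col k) = ∑ m, Θ' i m * φ (A'.col m) := by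
          rw [Fintype.sum_eq_single k fun m hm => by rw [hφA' m hm, mul_zero]]
      _ = ∑ m, Θ i m * φ (A.col m) := by
          rw [← map_row_mul_transpose, heq, map_row_mul_transpose]
      _ = Θ i k * φ (A.col k) :=
          Fintype.sum_eq_single k fun m hm => by rw [hφA m hm, mul_zero]
  rw [Pi.smul_apply, col_apply, col_apply, smul_eq_mul, div_mul_eq_mul_div, eq_div_iff hφk,
    entry_eq, mul_comm]

end Factorization

/-- Assumptions (2) and (3) on a loading matrix, over any semiring and any index types. The
nonempty `R(S)` are the sets `{i | ∀ k, Q i k ↔ Q j k}` of rows with the same support as a given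
row `j`. -/
structure IsLoading {ι κ R : Type*} [Semiring R] (Q : ι → κ → Prop) (A : Matrix ι κ R) :
    Prop where
  linearIndepOn (j : ι) :
    LinearIndepOn R (fun k (i : {i | ∀ k, Q i k ↔ Q j k}) => A i k) {k | Q j k}
  eq_zero {j : ι} {k : κ} : ¬ Q j k → A j k = 0

lemma IsLoading.linearIndependent_col {ι κ R : Type*} [Ring R] {Q : ι → κ → Prop}
    {A : Matrix ι κ R} (hA : IsLoading Q A) (hQ : ∀ k, ∃ j, Q j k) :
    LinearIndependent R A.col := by
  choose j hj using hQ
  exact linearIndependent_of_forall_linearIndepOn_comp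
    (fun k => LinearMap.funLeft R R (Subtype.val : {i | ∀ l, Q i l ↔ Q (j k) l} → ι))
    (fun k => {l | Q (j k) l}) hj (fun k => hA.linearIndepOn (j k))
    (fun _ l hl => funext fun i => hA.eq_zero (mt (i.2 l).1 hl))

lemma Assm2.isLoading {J K : ℕ} {A : Matrix (Fin J) (Fin K) ℝ} {Q : Fin J → Fin K → Bool}
    (h2 : Assm2 A Q) (h3 : Assm3 A Q) : IsLoading (fun j k => Q j k = true) A where
  linearIndepOn j := h2 {k | Q j k = true} ⟨j, fun _ => Iff.rfl⟩
  eq_zero h := h3 _ _ (Bool.eq_false_of_not_eq_true h)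

theorem exists_nonidentifiable_loading_of_nonidentifiable_factor_general
    {ν ι κ F : Type*} [Fintype κ] [Field F] {Q : ι → κ → Prop} (hQ : ∀ k, ∃ j, Q j k)
    {Θ Θ' : Matrix ν κ F} {A A' : Matrix ι κ F} (hA' : IsLoading Q A')
    (heq : Θ' * A'ᵀ = Θ * Aᵀ) {k : κ} (hk : ∀ c : F, Θ'.col k ≠ c • Θ.col k) :
    ∃ m ≠ k, LinearIndependent F ![A'.col m, A.col m] :=
  exists_linearIndependent_pair_col_of_mul_transpose_eq (hA'.linearIndependent_col hQ) heq hk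

theorem exists_nonidentifiable_loading_of_nonidentifiable_factor
    {K N J : ℕ} (hK : 0 < K) (hN : 0 < N) (hJ : 0 < J)
    (Θ : Matrix (Fin N) (Fin K) ℝ) (A : Matrix (Fin J) (Fin K) ℝ)
    (Q : Fin J → Fin K → Bool)
    (hΘ : Assm1 Θ) (hA2 : Assm2 A Q) (hA3 : Assm3 A Q)
    (hsupp : ∀ k : Fin K, (suppQ Q k).Nonempty)
    (k : Fin K)
    (hnotid : ¬ ∀ (Θ' : Matrix (Fin N) (Fin K) ℝ) (A' : Matrix (Fin J) (Fin K) ℝ),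
        Assm1 Θ' → Assm2 A' Q → Assm3 A' Q → Θ' * A'ᵀ = Θ * Aᵀ →
        ∃ c : ℝ, (fun i : Fin N => Θ' i k) = c • (fun i : Fin N => Θ i k)) :
    ∃ k' : Fin K, k' ≠ k ∧
      ∃ (Θ' : Matrix (Fin N) (Fin K) ℝ) (A' : Matrix (Fin J) (Fin K) ℝ),
        Assm1 Θ' ∧ Assm2 A' Q ∧ Assm3 A' Q ∧ Θ' * A'ᵀ = Θ * Aᵀ ∧
        LinearIndependent ℝ ![fun j : Fin J => A' j k', fun j : Fin J => A j k'] := by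
  push Not at hnotid
  obtain ⟨Θ', A', h1, h2, h3, heq, hne⟩ := hnotid
  obtain ⟨m, hmk, hm⟩ := exists_nonidentifiable_loading_of_nonidentifiable_factor_general hsupp
    (h2.isLoading h3) heq hne
  exact ⟨m, hmk, Θ', A', h1, h2, h3, heq, hm⟩
end
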